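/- Let α > 0, λ > 0, β > 0, and set m := α/2. Define the weighted Moreau envelope e(θ) := inf_{ϑ ∈ ℝ} { α|ϑ| + (m/(2λ))·(θ − ϑ)² } and let φ_β(θ) := θ·arsinh(θ/β) − √(θ² + β²) be the hyperbolic entropy. Then with β_g := α·√(4λ² + β²)/(2λ), the function θ ↦ β_g·φ_β(θ) − e(θ) is convex on ℝ; that is, e is β_g-smooth relative to φ_β. -/

import Mathlib

/-- The hyperbolic entropy with parameter `β > 0`. -/
noncomputable def hypEnt (β θ : ℝ) : ℝ :=
  θ * Real.arsinh (θ / β) - Real.sqrt (θ ^ 2 + β ^ 2)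

/-- The weighted Moreau envelope of `α|·|` with weight `m` and parameter `λ`. -/
noncomputable def wMoreau (α m lam θ : ℝ) : ℝ :=
  ⨅ ϑ : ℝ, (α * |ϑ| + m / (2 * lam) * (θ - ϑ) ^ 2)

/-- A real function whose first-order remainder at `x` is quadratically bounded is
differentiable at `x`. -/
lemma hasDerivAt_of_abs_remainder_le_sq {f : ℝ → ℝ} {f' x : ℝ}
    (h : ∀ y, |f y - f x - (y - x) * f'| ≤ (y - x) ^ 2) : HasDerivAt f f' x := by
  rw [hasDerivAt_iff_isLittleO]
  have hO : (fun y => f y - f x - (y - x) • f') =O[nhds x] fun y => (y - x) ^ 2 :=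
    Asymptotics.IsBigO.of_bound 1 (Filter.Eventually.of_forall fun y => by
      simpa [abs_of_nonneg (sq_nonneg (y - x))] using h y)
  exact hO.trans_isLittleO (by simpa using Asymptotics.isLittleO_pow_sub_sub x one_lt_two)

/-- The square of the positive part is differentiable. -/
lemma hasDerivAt_max_zero_sq (x : ℝ) :
    HasDerivAt (fun t : ℝ => (max t 0) ^ 2) (2 * max x 0) x := by
  refine hasDerivAt_of_abs_remainder_le_sq fun y => ?_
  rw [abs_le]
  rcases le_total x 0 with hx | hx <;> rcases le_total y 0 with hy | hy <;>
    simp only [max_eq_left, max_eq_right, hx, hy] <;> constructor <;>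
    nlinarith [sq_nonneg (x - y), sq_nonneg x, sq_nonneg y,
      mul_nonneg (sub_nonneg.2 hx) (sub_nonneg.2 hy)]

/-- With weight `α / 2`, the Moreau envelope of `α|·|` is a Huber function. -/
lemma wMoreau_half_eq {α lam : ℝ} (hα : 0 < α) (hlam : 0 < lam) (θ : ℝ) :
    wMoreau α (α / 2) lam θ = α / (4 * lam) *
      (θ ^ 2 - (max (θ - 2 * lam) 0) ^ 2 - (max (-θ - 2 * lam) 0) ^ 2) := by
  have hk : 0 < α / (4 * lam) := by positivity
  have hfactor (ϑ : ℝ) : α * |ϑ| + α / 2 / (2 * lam) * (θ - ϑ) ^ 2 =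
      α / (4 * lam) * (4 * lam * |ϑ| + (θ - ϑ) ^ 2) := by
    field_simp
    ring
  unfold wMoreau
  simp only [hfactor]
  apply le_antisymm
  · have hbdd : BddBelow (Set.range fun ϑ : ℝ =>
        α / (4 * lam) * (4 * lam * |ϑ| + (θ - ϑ) ^ 2)) :=
      ⟨0, by rintro _ ⟨ϑ, rfl⟩; positivity⟩
    refine (ciInf_le hbdd (max (θ - 2 * lam) 0 - max (-θ - 2 * lam) 0)).trans
      (mul_le_mul_of_nonneg_left ?_ hk.le)
    rcases le_total (θ - 2 * lam) 0 with h₁ | h₁ <;>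
      rcases le_total (-θ - 2 * lam) 0 with h₂ | h₂
    · simp [h₁, h₂]
    · rw [max_eq_right h₁, max_eq_left h₂, zero_sub, abs_neg, abs_of_nonneg h₂]
      nlinarith
    · rw [max_eq_left h₁, max_eq_right h₂, sub_zero, abs_of_nonneg h₁]
      nlinarith
    · linarith
  · refine le_ciInf fun ϑ => mul_le_mul_of_nonneg_left ?_ hk.le
    rcases le_total (θ - 2 * lam) 0 with h₁ | h₁ <;>
      rcases le_total (-θ - 2 * lam) 0 with h₂ | h₂ <;>
      simp only [max_eq_left, max_eq_right, h₁, h₂] <;>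
      rcases abs_cases ϑ with ⟨h, hϑ⟩ | ⟨h, hϑ⟩ <;> rw [h] <;>
      nlinarith [sq_nonneg ϑ, sq_nonneg (θ - ϑ - 2 * lam), sq_nonneg (θ - ϑ + 2 * lam)]

lemma hasDerivAt_wMoreau_half {α lam : ℝ} (hα : 0 < α) (hlam : 0 < lam) (θ : ℝ) :
    HasDerivAt (wMoreau α (α / 2) lam)
      (α / (2 * lam) * (θ - max (θ - 2 * lam) 0 + max (-θ - 2 * lam) 0)) θ := by
  rw [funext (wMoreau_half_eq hα hlam)]
  have h₁ := (hasDerivAt_max_zero_sq (θ - 2 * lam)).comp θ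
    ((hasDerivAt_id θ).sub_const (2 * lam))
  have h₂ := (hasDerivAt_max_zero_sq (-θ - 2 * lam)).comp θ
    ((hasDerivAt_id θ).neg.sub_const (2 * lam))
  refine ((((hasDerivAt_pow 2 θ).sub h₁).sub h₂).const_mul (α / (4 * lam))).congr_deriv ?_
  field_simp
  ring

lemma hasDerivAt_arsinh_div {β : ℝ} (hβ : 0 < β) (θ : ℝ) :
    HasDerivAt (fun t => Real.arsinh (t / β)) (√(θ ^ 2 + β ^ 2))⁻¹ θ := by
  refine ((hasDerivAt_id θ).div_const β).arsinh.congr_deriv ?_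
  have hsqrt : √(θ ^ 2 + β ^ 2) = √(1 + (θ / β) ^ 2) * β := by
    rw [← Real.sqrt_sq hβ.le, ← Real.sqrt_mul (by positivity), Real.sqrt_sq hβ.le]
    congr 1
    field_simp
    ring
  rw [hsqrt, smul_eq_mul, mul_inv, one_div, id]

lemma hasDerivAt_hypEnt {β : ℝ} (hβ : 0 < β) (θ : ℝ) :
    HasDerivAt (hypEnt β) (Real.arsinh (θ / β)) θ := by
  have hpos : 0 < θ ^ 2 + β ^ 2 := by positivity
  have hsqrt := ((hasDerivAt_pow 2 θ).add_const (β ^ 2)).sqrt hpos.ne'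
  refine (((hasDerivAt_id θ).mul (hasDerivAt_arsinh_div hβ θ)).sub hsqrt).congr_deriv ?_
  have := Real.sqrt_pos.2 hpos
  simp only [id]
  field_simp
  ring

/-- The derivative of `β_g·φ_β` minus the derivative of the envelope is monotone. -/
lemma monotone_arsinh_sub_clamp {α lam β : ℝ} (hα : 0 < α) (hlam : 0 < lam) (hβ : 0 < β) :
    Monotone fun θ : ℝ => α * √(4 * lam ^ 2 + β ^ 2) / (2 * lam) * Real.arsinh (θ / β) -
      α / (2 * lam) * (θ - max (θ - 2 * lam) 0 + max (-θ - 2 * lam) 0) := by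
  have hc : 0 ≤ α * √(4 * lam ^ 2 + β ^ 2) / (2 * lam) := by positivity
  have harsinh {x y : ℝ} (hxy : x ≤ y) :
      α * √(4 * lam ^ 2 + β ^ 2) / (2 * lam) * Real.arsinh (x / β) ≤
        α * √(4 * lam ^ 2 + β ^ 2) / (2 * lam) * Real.arsinh (y / β) :=
    mul_le_mul_of_nonneg_left
      (Real.arsinh_le_arsinh.2 (div_le_div_of_nonneg_right hxy hβ.le)) hc
  have hmid : MonotoneOn (fun θ : ℝ =>
      α * √(4 * lam ^ 2 + β ^ 2) / (2 * lam) * Real.arsinh (θ / β) - α / (2 * lam) * θ)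
      (Set.Icc (-(2 * lam)) (2 * lam)) := by
    have hderiv (θ : ℝ) := ((hasDerivAt_arsinh_div hβ θ).const_mul
      (α * √(4 * lam ^ 2 + β ^ 2) / (2 * lam))).sub
        ((hasDerivAt_id θ).const_mul (α / (2 * lam)))
    refine monotoneOn_of_hasDerivWithinAt_nonneg (convex_Icc _ _)
      (fun θ _ => (hderiv θ).continuousAt.continuousWithinAt)
      (fun θ _ => (hderiv θ).hasDerivWithinAt) fun θ hθ => ?_
    have hmem := interior_subset hθ
    have hpos : 0 < √(θ ^ 2 + β ^ 2) := Real.sqrt_pos.2 (by positivity)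
    have hle : √(θ ^ 2 + β ^ 2) ≤ √(4 * lam ^ 2 + β ^ 2) :=
      Real.sqrt_le_sqrt (by nlinarith [hmem.1, hmem.2])
    have hone : 1 ≤ √(4 * lam ^ 2 + β ^ 2) * (√(θ ^ 2 + β ^ 2))⁻¹ := by
      rw [← div_eq_mul_inv]
      exact (one_le_div hpos).2 hle
    have hk : 0 ≤ α / (2 * lam) := by positivity
    calc 0 ≤ α / (2 * lam) * (√(4 * lam ^ 2 + β ^ 2) * (√(θ ^ 2 + β ^ 2))⁻¹ - 1) :=
          mul_nonneg hk (sub_nonneg.2 hone)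
      _ = _ := by ring
  have hleft : MonotoneOn (fun θ : ℝ =>
      α * √(4 * lam ^ 2 + β ^ 2) / (2 * lam) * Real.arsinh (θ / β) -
      α / (2 * lam) * (θ - max (θ - 2 * lam) 0 + max (-θ - 2 * lam) 0))
      (Set.Iic (-(2 * lam))) := by
    intro x hx y hy hxy
    simp only [Set.mem_Iic] at hx hy
    simp only [max_eq_right (show x - 2 * lam ≤ 0 by linarith),
      max_eq_right (show y - 2 * lam ≤ 0 by linarith),
      max_eq_left (show 0 ≤ -x - 2 * lam by linarith),
      max_eq_left (show 0 ≤ -y - 2 * lam by linarith)]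
    linarith [harsinh hxy]
  have hright : MonotoneOn (fun θ : ℝ =>
      α * √(4 * lam ^ 2 + β ^ 2) / (2 * lam) * Real.arsinh (θ / β) -
      α / (2 * lam) * (θ - max (θ - 2 * lam) 0 + max (-θ - 2 * lam) 0))
      (Set.Ici (2 * lam)) := by
    intro x hx y hy hxy
    simp only [Set.mem_Ici] at hx hy
    simp only [max_eq_left (show 0 ≤ x - 2 * lam by linarith),
      max_eq_left (show 0 ≤ y - 2 * lam by linarith),
      max_eq_right (show -x - 2 * lam ≤ 0 by linarith),
      max_eq_right (show -y - 2 * lam ≤ 0 by linarith)]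
    linarith [harsinh hxy]
  have hcenter := hmid.congr (f₂ := fun θ : ℝ =>
      α * √(4 * lam ^ 2 + β ^ 2) / (2 * lam) * Real.arsinh (θ / β) -
      α / (2 * lam) * (θ - max (θ - 2 * lam) 0 + max (-θ - 2 * lam) 0)) fun θ hθ => by
    simp only [max_eq_right (show θ - 2 * lam ≤ 0 by linarith [hθ.2]),
      max_eq_right (show -θ - 2 * lam ≤ 0 by linarith [hθ.1]), sub_zero, add_zero]
  have hbounds : -(2 * lam) ≤ 2 * lam := by linarith
  have hIic := hleft.union_right hcenter isGreatest_Iic (isLeast_Icc hbounds)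
  rw [Set.Iic_union_Icc_eq_Iic hbounds] at hIic
  exact hIic.Iic_union_Ici hright

/-- With `m = α/2` and `β_g = α·√(4λ² + β²)/(2λ)`, the weighted Moreau envelope of
`α|·|` is `β_g`-smooth relative to the hyperbolic entropy `φ_β`:
`θ ↦ β_g·φ_β(θ) − e(θ)` is convex on `ℝ`. -/
theorem stmt18 (α lam β : ℝ) (hα : 0 < α) (hlam : 0 < lam) (hβ : 0 < β) :
    ConvexOn ℝ Set.univ
      (fun θ : ℝ =>
        α * Real.sqrt (4 * lam ^ 2 + β ^ 2) / (2 * lam) * hypEnt β θ -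
          wMoreau α (α / 2) lam θ) := by
  have hderiv (θ : ℝ) :=
    ((hasDerivAt_hypEnt hβ θ).const_mul (α * √(4 * lam ^ 2 + β ^ 2) / (2 * lam))).sub
      (hasDerivAt_wMoreau_half hα hlam θ)
  refine Monotone.convexOn_univ_of_deriv (fun θ => (hderiv θ).differentiableAt) ?_
  exact (funext fun θ => (hderiv θ).deriv) ▸ monotone_arsinh_sub_clamp hα hlam hβ
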